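/- There exist constants C > 0 and C₁ > 0, depending only on Ω, ω₀, ω and η⁰, such that for every T > 0, every bounded measurable potential a, every λ ≥ 1, every s ≥ C (e^{2λM} T + T² + T²‖a‖_∞^{1/2}), and every classical nonnegative solution q of the adjoint heat equation with Dirichlet boundary condition, one has λ ∫₀^T ∫_Ω e^{−sα(t,x)} s ξ(t,x)² η⁰(x) q(t,x) dx dt + ∫₀^T ∫_Ω e^{−sα(t,x)} ξ(t,x) q(t,x) dx dt ≤ C₁ λ ∫₀^T ∫_ω e^{−sα(t,x)} s ξ(t,x)² q(t,x) dx dt. -/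

import Mathlib

open MeasureTheory Real Set RealInnerProductSpace

noncomputable def spaceLaplacian {N : ℕ} (f : EuclideanSpace ℝ (Fin N) → ℝ)
    (x : EuclideanSpace ℝ (Fin N)) : ℝ :=
  ∑ i : Fin N, fderiv ℝ (fun y => fderiv ℝ f y (EuclideanSpace.single i 1)) x
    (EuclideanSpace.single i 1)

/-!
Test the inequality satisfied by `q` against `v = e^{-sα} η`. Both `q` and `η` vanish on `∂Ω`, so
Green's formula leaves no boundary term, and `e^{-sα}` vanishes as `t → 0` and `t → T`; hence the
integral of `q (A v + ∂ₜv - Δv)` is nonnegative. In `-Δv` the dominant terms are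
`-((sλξ)² η + 2 sλξ) |∇η|² e^{-sα}`. Away from the observation set `|∇η|²` is bounded below, and
for `s` as large as assumed these terms absorb all the others, with a negative multiple of
`(sλξ)² η + sλξ` to spare; over the observation set only an error of order `(sλξ)²` remains.
-/

section CarlemanEstimate

open Filter Topology Laplacian

section MeasureTheory

lemma sub_le_setIntegral_Ioo_of_hasDerivAt_of_tendsto {f f' φ : ℝ → ℝ} {a b fa fb : ℝ}
    (hab : a < b) (hf : ∀ t ∈ Ioo a b, HasDerivAt f (f' t) t)
    (hφ : IntegrableOn φ (Ioo a b)) (hle : ∀ t ∈ Ioo a b, f' t ≤ φ t)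
    (ha : Tendsto f (𝓝[>] a) (𝓝 fa)) (hb : Tendsto f (𝓝[<] b) (𝓝 fb)) :
    fb - fa ≤ ∫ t in Ioo a b, φ t := by
  have hfc : ContinuousOn f (Ioo a b) := fun t ht => (hf t ht).continuousAt.continuousWithinAt
  have hd : ∀ t ∈ Ioo a b, HasDerivWithinAt (extendFrom (Ioo a b) f) (f' t) (Ioi t) t := by
    intro t ht
    refine ((hf t ht).congr_of_eventuallyEq ?_).hasDerivWithinAt
    filter_upwards [isOpen_Ioo.mem_nhds ht] with τ hτ
    exact extendFrom_eq (subset_closure hτ) (hfc τ hτ)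
  have key := intervalIntegral.sub_le_integral_of_hasDeriv_right_of_le hab.le
    (continuousOn_Icc_extendFrom_Ioo hfc ha hb) hd
    (by rwa [integrableOn_Icc_iff_integrableOn_Ioo]) hle
  rwa [eq_lim_at_left_extendFrom_Ioo hab ha, eq_lim_at_right_extendFrom_Ioo hab hb,
    intervalIntegral.integral_of_le hab.le, integral_Ioc_eq_integral_Ioo] at key

lemma le_on_of_ae_restrict_le {X Y : Type*} [TopologicalSpace X] [MeasurableSpace X]
    {μ : Measure X} [μ.IsOpenPosMeasure] [TopologicalSpace Y] [LinearOrder Y]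
    [OrderClosedTopology Y] {U : Set X} {f g : X → Y} (hU : IsOpen U)
    (hf : ContinuousOn f U) (hg : ContinuousOn g U) (h : f ≤ᵐ[μ.restrict U] g) :
    ∀ x ∈ U, f x ≤ g x := by
  have hmax : (fun x => max (f x) (g x)) =ᵐ[μ.restrict U] g :=
    h.mono fun _ hx => max_eq_right hx
  intro x hx
  exact max_eq_right_iff.1 (Measure.eqOn_open_of_ae_eq hmax hU (hf.sup hg) hg hx)

lemma ae_abs_le_toReal_eLpNorm_top {X : Type*} [MeasurableSpace X] {μ : Measure X} {f : X → ℝ}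
    {B : ℝ} (hB : ∀ᵐ x ∂μ, |f x| ≤ B) : ∀ᵐ x ∂μ, |f x| ≤ (eLpNorm f ⊤ μ).toReal := by
  have hfin : eLpNorm f ⊤ μ ≠ ⊤ := by
    rw [eLpNorm_exponent_top]
    exact (eLpNormEssSup_lt_top_of_ae_bound hB).ne
  filter_upwards [ae_le_eLpNormEssSup (f := f) (μ := μ)] with x hx
  rw [← eLpNorm_exponent_top] at hx
  simpa using ENNReal.toReal_mono hfin hx

lemma continuousOn_prodMk_left {X Y Z : Type*} [TopologicalSpace X] [TopologicalSpace Y]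
    [TopologicalSpace Z] {f : X × Y → Z} {s : Set X} {t : Set Y} (hf : ContinuousOn f (s ×ˢ t))
    {x : X} (hx : x ∈ s) : ContinuousOn (fun y => f (x, y)) t :=
  hf.comp (by fun_prop) fun _ hy => ⟨hx, hy⟩

lemma integrableOn_of_continuousOn_closure {X F : Type*} [MetricSpace X] [ProperSpace X]
    [MeasurableSpace X] [OpensMeasurableSpace X] {μ : Measure X} [IsFiniteMeasureOnCompacts μ]
    [NormedAddCommGroup F] {s : Set X} (hs : Bornology.IsBounded s) {f : X → F}
    (hf : ContinuousOn f (closure s)) : IntegrableOn f s μ :=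
  (hf.integrableOn_compact hs.isCompact_closure).mono_set subset_closure

lemma hasDerivAt_setIntegral_of_continuousOn {X F : Type*} [TopologicalSpace X]
    [MeasurableSpace X] [OpensMeasurableSpace X] {μ : Measure X} [IsFiniteMeasureOnCompacts μ]
    [NormedAddCommGroup F] [NormedSpace ℝ F] {I : Set ℝ} {s k : Set X} (hI : IsOpen I)
    (hs : MeasurableSet s) (hk : IsCompact k) (hsk : s ⊆ k) {f f' : ℝ × X → F}
    (hf : ContinuousOn f (I ×ˢ k)) (hf' : ContinuousOn f' (I ×ˢ k))
    (hderiv : ∀ p ∈ I ×ˢ k, HasDerivAt (fun τ => f (τ, p.2)) (f' p) p.1) {t : ℝ} (ht : t ∈ I) :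
    HasDerivAt (fun τ => ∫ x in s, f (τ, x) ∂μ) (∫ x in s, f' (t, x) ∂μ) t := by
  have hμs : μ s ≠ ⊤ := measure_ne_top_of_subset hsk hk.measure_ne_top
  have slice_integrable {g : ℝ × X → F} (hg : ContinuousOn g (I ×ˢ k)) {τ : ℝ} (hτ : τ ∈ I) :
      IntegrableOn (fun x => g (τ, x)) s μ :=
    (continuousOn_prodMk_left hg hτ).integrableOn_of_subset_isCompact hk hs hsk hμs
  obtain ⟨ε, hε, hball⟩ := Metric.nhds_basis_closedBall.mem_iff.1 (hI.mem_nhds ht)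
  obtain ⟨B, hB⟩ := ((isCompact_closedBall t ε).prod hk).exists_bound_of_continuousOn
    (hf'.mono (prod_mono hball subset_rfl))
  refine (hasDerivAt_integral_of_dominated_loc_of_deriv_le (bound := fun _ => B)
    (F := fun τ x => f (τ, x)) (F' := fun τ x => f' (τ, x)) (Metric.closedBall_mem_nhds t hε)
    ?_ (slice_integrable hf ht) (slice_integrable hf' ht).aestronglyMeasurable
    (ae_restrict_of_forall_mem hs fun x hx τ hτ => hB (τ, x) ⟨hτ, hsk hx⟩)
    (integrableOn_const hμs)
    (ae_restrict_of_forall_mem hs fun x hx τ hτ => hderiv (τ, x) ⟨hball hτ, hsk hx⟩)).2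
  filter_upwards [hI.mem_nhds ht] with τ hτ using (slice_integrable hf hτ).aestronglyMeasurable

end MeasureTheory

section Green

lemma hasLineDerivAt_indicator {𝕜 E F : Type*} [NontriviallyNormedField 𝕜]
    [NormedAddCommGroup E] [NormedSpace 𝕜 E] [NormedAddCommGroup F] [NormedSpace 𝕜 F]
    {s : Set E} (hs : IsOpen s) {f f' : E → F} {v : E}
    (hf : ∀ x ∈ closure s, HasLineDerivAt 𝕜 f (f' x) x v)
    (hf0 : ∀ x ∈ frontier s, f x = 0) (hf'0 : ∀ x ∈ frontier s, f' x = 0) (x : E) :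
    HasLineDerivAt 𝕜 (s.indicator f) (s.indicator f' x) x v := by
  by_cases hxs : x ∈ s
  · rw [indicator_of_mem hxs]
    exact (hf x (subset_closure hxs)).congr_of_eventuallyEq
      ((eqOn_indicator.eventuallyEq_of_mem (hs.mem_nhds hxs)))
  rw [indicator_of_notMem hxs]
  by_cases hxc : x ∈ closure s
  · have hxf : x ∈ frontier s := hs.frontier_eq ▸ ⟨hxc, hxs⟩
    have h : HasLineDerivAt 𝕜 f 0 x v := hf'0 x hxf ▸ hf x hxc
    rw [HasLineDerivAt, hasDerivAt_iff_isLittleO] at h ⊢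
    -- Both functions vanish at `x`, and truncation does not increase the increments.
    refine (Asymptotics.isBigO_of_le _ fun t => ?_).trans_isLittleO h
    simpa only [zero_smul, add_zero, indicator_of_notMem hxs, hf0 x hxf, smul_zero, sub_zero]
      using norm_indicator_le_norm_self f _
  · have h : HasLineDerivAt 𝕜 (fun _ => (0 : F)) 0 x v := hasDerivAt_const (0 : 𝕜) (0 : F)
    refine h.congr_of_eventuallyEq ?_
    filter_upwards [isClosed_closure.isOpen_compl.mem_nhds hxc] with y hy
    exact indicator_of_notMem (fun h => hy (subset_closure h)) _

lemma setIntegral_eq_zero_of_hasLineDerivAt {E F : Type*} [NormedAddCommGroup E]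
    [NormedSpace ℝ E] [FiniteDimensional ℝ E] [MeasurableSpace E] [BorelSpace E] {μ : Measure E}
    [μ.IsAddHaarMeasure] [NormedAddCommGroup F] [NormedSpace ℝ F] {s : Set E} (hs : IsOpen s)
    {f f' : E → F} {v : E} (hf : ∀ x ∈ closure s, HasLineDerivAt ℝ f (f' x) x v)
    (hf0 : ∀ x ∈ frontier s, f x = 0) (hf'0 : ∀ x ∈ frontier s, f' x = 0)
    (hfi : IntegrableOn f s μ) (hf'i : IntegrableOn f' s μ) : ∫ x in s, f' x ∂μ = 0 := by
  have key := integral_bilinear_hasLineDerivAt_right_eq_neg_left_of_integrable (μ := μ)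
    (f := fun _ => (1 : ℝ)) (f' := fun _ => 0) (v := v) (B := ContinuousLinearMap.lsmul ℝ ℝ)
    (by simp) (by simpa using hf'i.integrable_indicator hs.measurableSet)
    (by simpa using hfi.integrable_indicator hs.measurableSet)
    (fun x _ => hasDerivAt_const (0 : ℝ) (1 : ℝ))
    (fun x _ => hasLineDerivAt_indicator hs hf hf0 hf'0 x)
  simpa [integral_indicator hs.measurableSet] using key

/-- Functions that are `C²` up to the boundary of `s`. The derivatives are those of a function on
the whole space, so `u` is differentiable across the boundary of `s`. -/
structure IsC2OnClosure {E : Type*} [NormedAddCommGroup E] [NormedSpace ℝ E] (u : E → ℝ)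
    (s : Set E) : Prop where
  differentiableAt : ∀ x ∈ closure s, DifferentiableAt ℝ u x
  differentiableAt_fderiv : ∀ x ∈ closure s, DifferentiableAt ℝ (fderiv ℝ u) x
  continuousOn_fderiv_fderiv : ContinuousOn (fderiv ℝ (fderiv ℝ u)) (closure s)

namespace IsC2OnClosure

section NormedSpace

variable {E : Type*} [NormedAddCommGroup E] [NormedSpace ℝ E] {u v : E → ℝ} {s : Set E}

lemma of_contDiff (hu : ContDiff ℝ 2 u) (s : Set E) : IsC2OnClosure u s := by
  have hu' : ContDiff ℝ 1 (fderiv ℝ u) := hu.fderiv_right (by norm_num)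
  exact ⟨fun x _ => hu.differentiable (by norm_num) x,
    fun x _ => hu'.differentiable (by norm_num) x,
    (hu'.continuous_fderiv (by norm_num)).continuousOn⟩

lemma continuousOn (hu : IsC2OnClosure u s) : ContinuousOn u (closure s) := fun x hx =>
  (hu.differentiableAt x hx).continuousAt.continuousWithinAt

lemma continuousOn_fderiv (hu : IsC2OnClosure u s) : ContinuousOn (fderiv ℝ u) (closure s) :=
  fun x hx => (hu.differentiableAt_fderiv x hx).continuousAt.continuousWithinAt

lemma continuousOn_fderiv_fderiv_apply (hu : IsC2OnClosure u s) (e : E) :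
    ContinuousOn (fun x => fderiv ℝ (fderiv ℝ u) x e e) (closure s) :=
  (hu.continuousOn_fderiv_fderiv.clm_apply continuousOn_const).clm_apply continuousOn_const

lemma hasLineDerivAt_mul_fderiv (hu : IsC2OnClosure u s) (hv : IsC2OnClosure v s) (e : E) {x : E}
    (hx : x ∈ closure s) :
    HasLineDerivAt ℝ (fun y => u y * fderiv ℝ v y e)
      (fderiv ℝ u x e * fderiv ℝ v x e + u x * fderiv ℝ (fderiv ℝ v) x e e) x e := by
  have h := (hu.differentiableAt x hx).hasFDerivAt.mul
    ((hv.differentiableAt_fderiv x hx).hasFDerivAt.clm_apply (hasFDerivAt_const e x))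
  refine (h.hasLineDerivAt e).congr_deriv ?_
  simp
  ring

variable [FiniteDimensional ℝ E] [MeasurableSpace E] [BorelSpace E] {μ : Measure E}
  [μ.IsAddHaarMeasure]

lemma integral_mul_fderiv_fderiv_sub_eq_zero (hs : IsOpen s) (hsb : Bornology.IsBounded s)
    (hu : IsC2OnClosure u s) (hu0 : ∀ x ∈ frontier s, u x = 0)
    (hv : IsC2OnClosure v s) (hv0 : ∀ x ∈ frontier s, v x = 0) (e : E) :
    ∫ x in s, (u x * fderiv ℝ (fderiv ℝ v) x e e - v x * fderiv ℝ (fderiv ℝ u) x e e) ∂μ =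
      0 := by
  refine setIntegral_eq_zero_of_hasLineDerivAt hs (v := e)
    (f := fun x => u x * fderiv ℝ v x e - v x * fderiv ℝ u x e) (fun x hx => ?_)
    (fun x hx => by simp [hu0 x hx, hv0 x hx]) (fun x hx => by simp [hu0 x hx, hv0 x hx])
    (integrableOn_of_continuousOn_closure hsb ?_) (integrableOn_of_continuousOn_closure hsb ?_)
  · refine HasDerivAt.congr_deriv ((hu.hasLineDerivAt_mul_fderiv hv e hx).sub
      (hv.hasLineDerivAt_mul_fderiv hu e hx)) ?_
    ring
  · exact (hu.continuousOn.mul (hv.continuousOn_fderiv.clm_apply continuousOn_const)).sub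
      (hv.continuousOn.mul (hu.continuousOn_fderiv.clm_apply continuousOn_const))
  · exact (hu.continuousOn.mul (hv.continuousOn_fderiv_fderiv_apply e)).sub
      (hv.continuousOn.mul (hu.continuousOn_fderiv_fderiv_apply e))

end NormedSpace

end IsC2OnClosure

section Laplacian

lemma laplacian_eq_sum_fderiv_fderiv {E F ι : Type*} [NormedAddCommGroup E]
    [InnerProductSpace ℝ E] [FiniteDimensional ℝ E] [NormedAddCommGroup F] [NormedSpace ℝ F]
    [Fintype ι] (b : OrthonormalBasis ι ℝ E) (u : E → F) (x : E) :
    Δ u x = ∑ i, fderiv ℝ (fderiv ℝ u) x (b i) (b i) := by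
  simp [InnerProductSpace.laplacian_eq_iteratedFDeriv_orthonormalBasis u b,
    iteratedFDeriv_two_apply]

lemma spaceLaplacian_eq_laplacian {N : ℕ} {u : EuclideanSpace ℝ (Fin N) → ℝ}
    {x : EuclideanSpace ℝ (Fin N)} (hu : DifferentiableAt ℝ (fderiv ℝ u) x) :
    spaceLaplacian u x = Δ u x := by
  rw [laplacian_eq_sum_fderiv_fderiv (EuclideanSpace.basisFun (Fin N) ℝ), spaceLaplacian]
  refine Finset.sum_congr rfl fun i _ => ?_
  simp [fderiv_clm_apply hu (differentiableAt_const _)]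

lemma exists_pos_le_norm_gradient_sq {E : Type*} [NormedAddCommGroup E] [InnerProductSpace ℝ E]
    [CompleteSpace E] {u : E → ℝ} {k : Set E} (hu : ContDiff ℝ 1 u) (hk : IsCompact k)
    (hgrad : ∀ x ∈ k, gradient u x ≠ 0) :
    ∃ g > 0, ∀ x ∈ k, g ≤ ‖gradient u x‖ ^ 2 := by
  have hcont : Continuous (gradient u) :=
    (InnerProductSpace.toDual ℝ E).symm.continuous.comp (hu.continuous_fderiv one_ne_zero)
  exact hk.exists_forall_le' (hcont.norm.pow 2).continuousOn fun x hx =>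
    pow_pos (norm_pos_iff.2 (hgrad x hx)) 2

variable {E : Type*} [NormedAddCommGroup E] [InnerProductSpace ℝ E] [FiniteDimensional ℝ E]
  {u v : E → ℝ} {s : Set E}

lemma sum_fderiv_sq_eq_norm_gradient_sq {ι : Type*} [Fintype ι] (b : OrthonormalBasis ι ℝ E)
    (u : E → ℝ) (x : E) : ∑ i, fderiv ℝ u x (b i) ^ 2 = ‖gradient u x‖ ^ 2 := by
  rw [← b.sum_sq_norm_inner_left (gradient u x)]
  simp [gradient]

lemma laplacian_comp {P P' : ℝ → ℝ} {P'' : ℝ} {x : E}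
    (hu : ContDiffAt ℝ 2 u x) (hP : ∀ y, HasDerivAt P (P' y) y)
    (hP' : HasDerivAt P' P'' (u x)) :
    Δ (fun z => P (u z)) x = P'' * ‖gradient u x‖ ^ 2 + P' (u x) * Δ u x := by
  have hfd : fderiv ℝ (fun z => P (u z)) =ᶠ[𝓝 x] fun y => P' (u y) • fderiv ℝ u y := by
    filter_upwards [hu.eventually (by simp)] with y hy
    exact ((hP (u y)).comp_hasFDerivAt y (hy.differentiableAt (by norm_num)).hasFDerivAt).fderiv
  have hu' : DifferentiableAt ℝ (fderiv ℝ u) x :=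
    (hu.fderiv_right (m := 1) (by norm_num)).differentiableAt (by norm_num)
  have hfdd : fderiv ℝ (fun y => P' (u y) • fderiv ℝ u y) x =
      P' (u x) • fderiv ℝ (fderiv ℝ u) x + (P'' • fderiv ℝ u x).smulRight (fderiv ℝ u x) :=
    ((hP'.comp_hasFDerivAt x (hu.differentiableAt (by norm_num)).hasFDerivAt).smul
      hu'.hasFDerivAt).fderiv
  let b := stdOrthonormalBasis ℝ E
  rw [laplacian_eq_sum_fderiv_fderiv b, laplacian_eq_sum_fderiv_fderiv b,
    ← sum_fderiv_sq_eq_norm_gradient_sq b, hfd.fderiv_eq, hfdd,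
    Finset.mul_sum, Finset.mul_sum, ← Finset.sum_add_distrib]
  refine Finset.sum_congr rfl fun i _ => ?_
  simp
  ring

lemma IsC2OnClosure.continuousOn_laplacian (hu : IsC2OnClosure u s) :
    ContinuousOn (Δ u) (closure s) := by
  refine ContinuousOn.congr ?_ fun x _ =>
    laplacian_eq_sum_fderiv_fderiv (stdOrthonormalBasis ℝ E) u x
  exact continuousOn_finsetSum _ fun i _ => hu.continuousOn_fderiv_fderiv_apply _

lemma IsC2OnClosure.integral_mul_laplacian_eq [MeasurableSpace E] [BorelSpace E] {μ : Measure E}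
    [μ.IsAddHaarMeasure] (hs : IsOpen s) (hsb : Bornology.IsBounded s)
    (hu : IsC2OnClosure u s) (hu0 : ∀ x ∈ frontier s, u x = 0)
    (hv : IsC2OnClosure v s) (hv0 : ∀ x ∈ frontier s, v x = 0) :
    ∫ x in s, u x * Δ v x ∂μ = ∫ x in s, v x * Δ u x ∂μ := by
  have huv : IntegrableOn (fun x => u x * Δ v x) s μ :=
    integrableOn_of_continuousOn_closure hsb (hu.continuousOn.mul hv.continuousOn_laplacian)
  have hvu : IntegrableOn (fun x => v x * Δ u x) s μ :=
    integrableOn_of_continuousOn_closure hsb (hv.continuousOn.mul hu.continuousOn_laplacian)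
  rw [← sub_eq_zero, ← integral_sub huv hvu]
  simp only [laplacian_eq_sum_fderiv_fderiv (stdOrthonormalBasis ℝ E), Finset.mul_sum,
    ← Finset.sum_sub_distrib]
  rw [integral_finsetSum]
  · exact Finset.sum_eq_zero fun i _ =>
      integral_mul_fderiv_fderiv_sub_eq_zero hs hsb hu hu0 hv hv0 _
  · exact fun i _ => integrableOn_of_continuousOn_closure hsb
      ((hu.continuousOn.mul (hv.continuousOn_fderiv_fderiv_apply _)).sub
        (hv.continuousOn.mul (hu.continuousOn_fderiv_fderiv_apply _)))

/-- Green's formula moves the Laplacian of the subsolution `u` onto the test function `v`. -/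
lemma IsC2OnClosure.integral_mul_add_mul_le [MeasurableSpace E] [BorelSpace E] {μ : Measure E}
    [μ.IsAddHaarMeasure] (hs : IsOpen s) (hsb : Bornology.IsBounded s)
    (hu : IsC2OnClosure u s) (hu0 : ∀ x ∈ frontier s, u x = 0)
    (hv : IsC2OnClosure v s) (hv0 : ∀ x ∈ frontier s, v x = 0) (hv_nonneg : ∀ x ∈ s, 0 ≤ v x)
    {f w : E → ℝ} (hf : ContinuousOn f (closure s)) (hw : ContinuousOn w (closure s)) {A : ℝ}
    (hfu : ∀ x ∈ s, f x + Δ u x ≤ A * u x) :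
    ∫ x in s, (f x * v x + u x * w x) ∂μ ≤ ∫ x in s, u x * (A * v x + w x - Δ v x) ∂μ := by
  have hvu : IntegrableOn (fun x => v x * Δ u x) s μ :=
    integrableOn_of_continuousOn_closure hsb (hv.continuousOn.mul hu.continuousOn_laplacian)
  have huv : IntegrableOn (fun x => u x * Δ v x) s μ :=
    integrableOn_of_continuousOn_closure hsb (hu.continuousOn.mul hv.continuousOn_laplacian)
  have hsub : IntegrableOn (fun x => v x * Δ u x - u x * Δ v x) s μ := hvu.sub huv
  have hfw : IntegrableOn (fun x => f x * v x + u x * w x) s μ :=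
    integrableOn_of_continuousOn_closure hsb ((hf.mul hv.continuousOn).add (hu.continuousOn.mul hw))
  have hgoal : IntegrableOn (fun x => u x * (A * v x + w x - Δ v x)) s μ :=
    integrableOn_of_continuousOn_closure hsb (hu.continuousOn.mul
      (((continuousOn_const.mul hv.continuousOn).add hw).sub hv.continuousOn_laplacian))
  calc ∫ x in s, (f x * v x + u x * w x) ∂μ
      = ∫ x in s, ((f x * v x + u x * w x) + (v x * Δ u x - u x * Δ v x)) ∂μ := by
        rw [integral_add hfw hsub, integral_sub hvu huv,
          integral_mul_laplacian_eq hs hsb hu hu0 hv hv0, sub_self, add_zero]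
    _ ≤ ∫ x in s, u x * (A * v x + w x - Δ v x) ∂μ := by
        refine setIntegral_mono_on (hfw.add hsub) hgoal hs.measurableSet fun x hx => ?_
        linear_combination mul_le_mul_of_nonneg_right (hfu x hx) (hv_nonneg x hx)

end Laplacian

end Green

section Weight

variable {E : Type*}

/-- The weight `ξ` of the Carleman estimate, at the point `p = (t, x)`. -/
noncomputable def carlemanXi (η : E → ℝ) (T lam : ℝ) (p : ℝ × E) : ℝ :=
  exp (lam * η p.2) / (p.1 * (T - p.1))

/-- The weight `α` of the Carleman estimate, at the point `p = (t, x)`. -/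
noncomputable def carlemanAlpha (η : E → ℝ) (M T lam : ℝ) (p : ℝ × E) : ℝ :=
  (exp (2 * lam * M) - exp (lam * η p.2)) / (p.1 * (T - p.1))

/-- The exponential weight `e^{-sα}` of the Carleman estimate, at the point `p = (t, x)`. -/
noncomputable def carlemanWeight (η : E → ℝ) (M T lam s : ℝ) (p : ℝ × E) : ℝ :=
  exp (-s * carlemanAlpha η M T lam p)

/-- The time derivative of `e^{-sα}`. -/
noncomputable def carlemanWeightDeriv (η : E → ℝ) (M T lam s : ℝ) (p : ℝ × E) : ℝ :=
  carlemanWeight η M T lam s p *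
    (s * carlemanAlpha η M T lam p * (T - 2 * p.1) / (p.1 * (T - p.1)))

/-- Up to a positive factor, the source for which `e^{-sα} η` is a subsolution of the equation dual
to the adjoint heat equation. It is positive only over the observation set `ω`. -/
noncomputable def carlemanSource (η : E → ℝ) (M T lam s : ℝ) (ω : Set E) (p : ℝ × E) : ℝ :=
  (Prod.snd ⁻¹' ω).indicator (fun p => 2 * (M + 1) * lam *
      (carlemanWeight η M T lam s p * (s * carlemanXi η T lam p ^ 2))) p
    - (lam * (carlemanWeight η M T lam s p * (s * carlemanXi η T lam p ^ 2) * η p.2)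
      + carlemanWeight η M T lam s p * carlemanXi η T lam p)

variable {η : E → ℝ} {M T lam s : ℝ}

local notation "ξ" => carlemanXi η T lam
local notation "α" => carlemanAlpha η M T lam
local notation "W" => carlemanWeight η M T lam s
local notation "Wₜ" => carlemanWeightDeriv η M T lam s

lemma mul_sub_pos_of_mem_Ioo {t : ℝ} (ht : t ∈ Ioo 0 T) : 0 < t * (T - t) :=
  mul_pos ht.1 (sub_pos.2 ht.2)

lemma carlemanXi_pos {p : ℝ × E} (hp : p.1 ∈ Ioo 0 T) : 0 < ξ p :=
  div_pos (exp_pos _) (mul_sub_pos_of_mem_Ioo hp)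

lemma carlemanWeight_pos (p : ℝ × E) : 0 < W p :=
  exp_pos _

lemma hasDerivAt_carlemanWeight {t : ℝ} (ht : t ∈ Ioo 0 T) (x : E) :
    HasDerivAt (fun τ => W (τ, x)) (Wₜ (t, x)) t := by
  have hr : HasDerivAt (fun τ => τ * (T - τ)) (1 * (T - t) + t * (-1)) t :=
    (hasDerivAt_id t).mul ((hasDerivAt_id t).const_sub T)
  have hα : HasDerivAt (fun τ => α (τ, x)) (-(α (t, x) * (T - 2 * t) / (t * (T - t)))) t := by
    refine ((hasDerivAt_const t (exp (2 * lam * M) - exp (lam * η x))).div hr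
      (mul_sub_pos_of_mem_Ioo ht).ne').congr_deriv ?_
    have := (mul_sub_pos_of_mem_Ioo ht).ne'
    rw [carlemanAlpha]
    generalize t * (T - t) = r at this
    field_simp
    ring
  refine (hα.const_mul (-s)).exp.congr_deriv ?_
  rw [carlemanWeightDeriv, carlemanWeight]
  ring

section Continuity

variable [TopologicalSpace E]

lemma continuousOn_carlemanXi (hη : Continuous η) : ContinuousOn (ξ) (Ioo 0 T ×ˢ univ) := by
  refine ContinuousOn.div (by fun_prop) (by fun_prop) fun p hp => (mul_sub_pos_of_mem_Ioo hp.1).ne'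

lemma continuousOn_carlemanAlpha (hη : Continuous η) :
    ContinuousOn (α) (Ioo 0 T ×ˢ univ) := by
  refine ContinuousOn.div (by fun_prop) (by fun_prop) fun p hp => (mul_sub_pos_of_mem_Ioo hp.1).ne'

lemma continuousOn_carlemanWeight (hη : Continuous η) :
    ContinuousOn (W) (Ioo 0 T ×ˢ univ) :=
  (continuousOn_const.mul (continuousOn_carlemanAlpha hη)).rexp

lemma continuousOn_carlemanWeightDeriv (hη : Continuous η) :
    ContinuousOn (Wₜ) (Ioo 0 T ×ˢ univ) := by
  refine (continuousOn_carlemanWeight hη).mul (ContinuousOn.div ?_ (by fun_prop)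
    fun p hp => (mul_sub_pos_of_mem_Ioo hp.1).ne')
  exact (continuousOn_const.mul (continuousOn_carlemanAlpha hη)).mul (by fun_prop)

end Continuity

section Decay

lemma sub_one_mul_carlemanXi_le_carlemanAlpha {p : ℝ × E} (hp : p.1 ∈ Ioo 0 T) (hlam : 0 ≤ lam)
    (hη : η p.2 ≤ M) : (exp (lam * M) - 1) * ξ p ≤ α p := by
  rw [carlemanXi, carlemanAlpha, ← mul_div_assoc]
  refine div_le_div_of_nonneg_right ?_ (mul_sub_pos_of_mem_Ioo hp).le
  have h : exp (2 * lam * M) = exp (lam * M) * exp (lam * M) := by rw [← exp_add]; ring_nf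
  have h' : exp (lam * M) * exp (lam * η p.2) ≤ exp (lam * M) * exp (lam * M) := by gcongr
  linarith

lemma carlemanWeight_mul_pow_le {p : ℝ × E} (hp : p.1 ∈ Ioo 0 T) (hlam : 0 < lam) (hM : 0 < M)
    (hη : η p.2 ≤ M) (hs : 0 ≤ s) (n : ℕ) :
    W p * (s * ξ p) ^ n ≤ n.factorial / (exp (lam * M) - 1) ^ n := by
  have hc : 0 < exp (lam * M) - 1 := sub_pos.2 (one_lt_exp_iff.2 (mul_pos hlam hM))
  set z := (exp (lam * M) - 1) * (s * ξ p)
  have hz : 0 ≤ z := mul_nonneg hc.le (mul_nonneg hs (carlemanXi_pos hp).le)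
  have hW : W p ≤ exp (-z) := by
    refine exp_le_exp.2 ?_
    have := mul_le_mul_of_nonneg_left
      (sub_one_mul_carlemanXi_le_carlemanAlpha hp hlam.le hη) hs
    simp only [z]
    linarith
  have hexp : exp (-z) * z ^ n ≤ n.factorial := by
    have := pow_div_factorial_le_exp z hz n
    rw [div_le_iff₀ (by positivity)] at this
    rw [exp_neg, inv_mul_le_iff₀ (exp_pos z)]
    exact this
  rw [le_div_iff₀ (by positivity), mul_assoc, ← mul_pow, mul_comm (s * _)]
  exact (mul_le_mul_of_nonneg_right hW (by positivity)).trans hexp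

lemma carlemanWeight_le_mul_sub {p : ℝ × E} (hp : p.1 ∈ Ioo 0 T) (hlam : 0 < lam) (hM : 0 < M)
    (hη0 : 0 ≤ η p.2) (hη : η p.2 ≤ M) (hs : 0 < s) :
    W p ≤ p.1 * (T - p.1) / (s * (exp (lam * M) - 1)) := by
  have hc : 0 < exp (lam * M) - 1 := sub_pos.2 (one_lt_exp_iff.2 (mul_pos hlam hM))
  have hr := mul_sub_pos_of_mem_Ioo hp
  have hξ : 1 ≤ p.1 * (T - p.1) * ξ p := by
    rw [carlemanXi, mul_div_cancel₀ _ hr.ne']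
    exact one_le_exp (mul_nonneg hlam.le hη0)
  have h : W p * (s * ξ p) ≤ 1 / (exp (lam * M) - 1) := by
    simpa using carlemanWeight_mul_pow_le hp hlam hM hη hs.le 1
  rw [le_div_iff₀ hc] at h
  rw [le_div_iff₀ (by positivity)]
  calc W p * (s * (exp (lam * M) - 1))
      ≤ W p * (s * (exp (lam * M) - 1)) * (p.1 * (T - p.1) * ξ p) :=
        le_mul_of_one_le_right (mul_nonneg (carlemanWeight_pos p).le (by positivity)) hξ
    _ = p.1 * (T - p.1) * (W p * (s * ξ p) * (exp (lam * M) - 1)) := by ring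
    _ ≤ p.1 * (T - p.1) := mul_le_of_le_one_right hr.le h

end Decay

section Laplacian

variable [NormedAddCommGroup E] [InnerProductSpace ℝ E] [FiniteDimensional ℝ E]

lemma laplacian_carlemanWeight_mul (hη : ContDiff ℝ 2 η) (t : ℝ) (x : E) :
    Δ (fun z => W (t, z) * η z) x = W (t, x) *
      (((s * lam * ξ (t, x)) ^ 2 * η x + 2 * (s * lam * ξ (t, x))
          + lam * (s * lam * ξ (t, x)) * η x) * ‖gradient η x‖ ^ 2
        + (s * lam * ξ (t, x) * η x + 1) * Δ η x) := by
  set r := t * (T - t) with hr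
  let X : ℝ → ℝ := fun y => s * lam * (exp (lam * y) / r)
  let w : ℝ → ℝ := fun y => exp (-s * ((exp (2 * lam * M) - exp (lam * y)) / r))
  have hexp (y : ℝ) : HasDerivAt (fun y => exp (lam * y)) (exp (lam * y) * (lam * 1)) y :=
    ((hasDerivAt_id y).const_mul lam).exp
  have hX (y : ℝ) : HasDerivAt X (lam * X y) y :=
    (((hexp y).div_const r).const_mul (s * lam)).congr_deriv (by simp only [X]; ring)
  have hw (y : ℝ) : HasDerivAt w (w y * X y) y :=
    ((((hexp y).const_sub _).div_const r).const_mul (-s)).exp.congr_deriv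
      (by simp only [X, w]; ring)
  have hP (y : ℝ) : HasDerivAt (fun y => w y * y) (w y * (X y * y + 1)) y :=
    ((hw y).mul (hasDerivAt_id y)).congr_deriv (by simp only [id]; ring)
  have hP' (y : ℝ) : HasDerivAt (fun y => w y * (X y * y + 1))
      (w y * (X y ^ 2 * y + 2 * X y + lam * X y * y)) y :=
    ((hw y).mul (((hX y).mul (hasDerivAt_id y)).add_const 1)).congr_deriv
      (by simp only [Pi.mul_apply, id]; ring)
  refine (laplacian_comp hη.contDiffAt hP (hP' (η x))).trans ?_
  simp only [X, w, carlemanWeight, carlemanAlpha, carlemanXi, ← hr]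
  ring

end Laplacian

section Subsolution

/-- The parameters admitted in the Carleman estimate with constant `C` on the time interval
`(0, T)`, for potentials bounded by `A`. -/
structure IsCarlemanParameter (C M T A lam s : ℝ) : Prop where
  one_le_const : 1 ≤ C
  time_pos : 0 < T
  potential_nonneg : 0 ≤ A
  one_le : 1 ≤ lam
  le : C * (exp (2 * lam * M) * T + T ^ 2 + T ^ 2 * √A) ≤ s

/-- The properties of `η` up to the boundary of `Ω` that the weights rely on; the condition on its
gradient is separate, since it involves the observation set. -/
structure IsCarlemanProfile [NormedAddCommGroup E] [NormedSpace ℝ E] (Ω : Set E) (η : E → ℝ)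
    (M : ℝ) : Prop where
  contDiff : ContDiff ℝ 2 η
  nonneg : ∀ x ∈ closure Ω, 0 ≤ η x
  le : ∀ x ∈ closure Ω, η x ≤ M
  eq_zero : ∀ x ∈ frontier Ω, η x = 0
  bound_pos : 0 < M

lemma isCarlemanProfile_of_isGreatest [NormedAddCommGroup E] [NormedSpace ℝ E] {Ω : Set E}
    (hη : ContDiff ℝ 2 η) (hΩ : Ω.Nonempty) (hpos : ∀ x ∈ Ω, 0 < η x)
    (hbd : ∀ x ∈ frontier Ω, η x = 0) (hM : IsGreatest (η '' closure Ω) M) :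
    IsCarlemanProfile Ω η M where
  contDiff := hη
  nonneg x hx := by
    rw [closure_eq_self_union_frontier] at hx
    exact hx.elim (fun h => (hpos x h).le) fun h => (hbd x h).ge
  le x hx := hM.2 (mem_image_of_mem η hx)
  eq_zero := hbd
  bound_pos := by
    obtain ⟨x, hx⟩ := hΩ
    exact (hpos x hx).trans_le (hM.2 (mem_image_of_mem η (subset_closure hx)))

namespace IsCarlemanParameter

variable {C A : ℝ}

lemma mul_time_sq_le (h : IsCarlemanParameter C M T A lam s) : C * T ^ 2 ≤ s := by
  have hC := zero_le_one.trans h.one_le_const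
  have hT := h.time_pos
  refine le_trans (mul_le_mul_of_nonneg_left ?_ hC) h.le
  linarith [show 0 ≤ exp (2 * lam * M) * T + T ^ 2 * √A by positivity]

lemma mul_sqrt_mul_time_sq_le (h : IsCarlemanParameter C M T A lam s) :
    C * √A * T ^ 2 ≤ s := by
  have hC := zero_le_one.trans h.one_le_const
  have hT := h.time_pos
  rw [mul_assoc, mul_comm (√A)]
  refine le_trans (mul_le_mul_of_nonneg_left ?_ hC) h.le
  linarith [show 0 ≤ exp (2 * lam * M) * T + T ^ 2 by positivity]

lemma mul_exp_mul_time_le (h : IsCarlemanParameter C M T A lam s) :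
    C * (exp (2 * lam * M) * T) ≤ s := by
  have hC := zero_le_one.trans h.one_le_const
  refine le_trans (mul_le_mul_of_nonneg_left ?_ hC) h.le
  linarith [show 0 ≤ T ^ 2 + T ^ 2 * √A by positivity]

lemma parameter_pos (h : IsCarlemanParameter C M T A lam s) : 0 < s := by
  have hC := zero_lt_one.trans_le h.one_le_const
  have hT := h.time_pos
  exact lt_of_lt_of_le (by positivity) h.mul_time_sq_le

end IsCarlemanParameter

lemma four_mul_le_mul_carlemanXi {k : ℝ} {p : ℝ × E} (hp : p.1 ∈ Ioo 0 T) (hη : 0 ≤ η p.2)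
    (hk : 0 ≤ k) (hlam : 1 ≤ lam) (hks : k * T ^ 2 ≤ s) : 4 * k ≤ s * lam * ξ p := by
  have hs : 0 ≤ s := le_trans (by positivity) hks
  have hexp : 1 ≤ lam * exp (lam * η p.2) :=
    one_le_mul_of_one_le_of_one_le hlam (one_le_exp (by positivity))
  have hr : 4 * (p.1 * (T - p.1)) ≤ T ^ 2 := by nlinarith [sq_nonneg (T - 2 * p.1)]
  rw [carlemanXi, ← mul_div_assoc, le_div_iff₀ (mul_sub_pos_of_mem_Ioo hp)]
  calc 4 * k * (p.1 * (T - p.1)) = k * (4 * (p.1 * (T - p.1))) := by ring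
    _ ≤ s := (mul_le_mul_of_nonneg_left hr hk).trans hks
    _ ≤ s * (lam * exp (lam * η p.2)) := le_mul_of_one_le_right hs hexp
    _ = s * lam * exp (lam * η p.2) := by ring

lemma mul_carlemanAlpha_div_le_sq {C : ℝ} {p : ℝ × E} (hp : p.1 ∈ Ioo 0 T) (hη : 0 ≤ η p.2)
    (hηM : η p.2 ≤ M) (hC : 0 ≤ C) (hlam : 1 ≤ lam) (hs : C * (exp (2 * lam * M) * T) ≤ s) :
    C * (s * α p * (T - 2 * p.1) / (p.1 * (T - p.1))) ≤ (s * lam * ξ p) ^ 2 := by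
  have hT : 0 < T := hp.1.trans hp.2
  have hs0 : 0 ≤ s := le_trans (by positivity) hs
  have hexp : 1 ≤ lam * exp (lam * η p.2) :=
    one_le_mul_of_one_le_of_one_le hlam (one_le_exp (by positivity))
  have hle : exp (lam * η p.2) ≤ exp (2 * lam * M) :=
    exp_le_exp.2 (by nlinarith [mul_nonneg (zero_le_one.trans hlam) (hη.trans hηM)])
  have hα : (exp (2 * lam * M) - exp (lam * η p.2)) * (T - 2 * p.1) ≤ exp (2 * lam * M) * T := by
    nlinarith [mul_nonneg (sub_nonneg.2 hle) hp.1.le, mul_pos (exp_pos (lam * η p.2)) hT]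
  have hr := mul_sub_pos_of_mem_Ioo hp
  rw [carlemanAlpha, carlemanXi]
  generalize p.1 * (T - p.1) = r at hr
  calc C * (s * ((exp (2 * lam * M) - exp (lam * η p.2)) / r) * (T - 2 * p.1) / r)
      = s * (C * ((exp (2 * lam * M) - exp (lam * η p.2)) * (T - 2 * p.1))) / r ^ 2 := by
        field_simp
    _ ≤ s * s / r ^ 2 := by
        gcongr
        exact (mul_le_mul_of_nonneg_left hα hC).trans hs
    _ ≤ (s * (lam * exp (lam * η p.2))) ^ 2 / r ^ 2 := by
        rw [← sq]
        gcongr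
        exact le_mul_of_one_le_right hs0 hexp
    _ = (s * lam * (exp (lam * η p.2) / r)) ^ 2 := by field_simp

lemma lower_order_terms_le {C A K g D : ℝ} {p : ℝ × E} (hp : p.1 ∈ Ioo 0 T) (hη : 0 ≤ η p.2)
    (hηM : η p.2 ≤ M) (h : IsCarlemanParameter C M T A lam s) (hC : K + 8 ≤ C * g)
    (hD : |D| ≤ K) :
    A * η p.2 + s * α p * (T - 2 * p.1) / (p.1 * (T - p.1)) * η p.2
        - (s * lam * ξ p * η p.2 + 1) * D ≤
      g / 2 * (s * lam * ξ p * (s * lam * ξ p * η p.2 + 1)) := by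
  have hC0 : 0 < C := zero_lt_one.trans_le h.one_le_const
  have hK0 : 0 ≤ K := (abs_nonneg D).trans hD
  have hg : 0 < g := pos_of_mul_pos_right (by linarith) hC0.le
  have hCX := four_mul_le_mul_carlemanXi hp hη hC0.le h.one_le h.mul_time_sq_le
  have hAX := four_mul_le_mul_carlemanXi hp hη (by positivity) h.one_le h.mul_sqrt_mul_time_sq_le
  have htX := mul_carlemanAlpha_div_le_sq hp hη hηM hC0.le h.one_le h.mul_exp_mul_time_le
  set X := s * lam * ξ p
  set τ := s * α p * (T - 2 * p.1) / (p.1 * (T - p.1))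
  have hX : 0 ≤ X := le_trans (by positivity) hCX
  have hDle : -D ≤ X * g / 4 := by
    nlinarith [neg_le_abs D, mul_le_mul_of_nonneg_right hCX hg.le]
  have hAle : A ≤ X ^ 2 * g / 8 := by
    have hsq : 16 * C ^ 2 * A ≤ X ^ 2 := by
      have := pow_le_pow_left₀ (by positivity) hAX 2
      rwa [mul_pow, mul_pow, sq_sqrt h.potential_nonneg, ← mul_assoc,
        show (4 : ℝ) ^ 2 = 16 by norm_num] at this
    have hCCg : 8 ≤ 16 * C ^ 2 * g := by nlinarith [h.one_le_const]
    nlinarith [mul_le_mul_of_nonneg_right hsq hg.le,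
      mul_le_mul_of_nonneg_left hCCg h.potential_nonneg]
  have hτle : τ ≤ X ^ 2 * g / 8 := by
    by_cases hτ : 0 ≤ τ
    · nlinarith [mul_le_mul_of_nonneg_right htX hg.le,
        mul_le_mul_of_nonneg_left ((le_add_of_nonneg_left hK0).trans hC) hτ]
    · exact (not_le.1 hτ).le.trans (by positivity)
  calc A * η p.2 + τ * η p.2 - (X * η p.2 + 1) * D
      = A * η p.2 + τ * η p.2 + (X * η p.2 + 1) * (-D) := by ring
    _ ≤ X ^ 2 * g / 8 * η p.2 + X ^ 2 * g / 8 * η p.2 + (X * η p.2 + 1) * (X * g / 4) := by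
        gcongr
    _ ≤ g / 2 * (X * (X * η p.2 + 1)) := by nlinarith [mul_nonneg hX hg.le]

lemma sub_indicator_le_higher_order_terms {ω : Set E} {g G X : ℝ} {p : ℝ × E} (hη : 0 ≤ η p.2)
    (hηM : η p.2 ≤ M) (hlam : 0 ≤ lam) (hX : 1 ≤ X) (hg : 0 ≤ g) (hG : 0 ≤ G)
    (hgG : p.2 ∉ ω → g ≤ G) :
    g * (X * (X * η p.2 + 1)) - (Prod.snd ⁻¹' ω).indicator (fun _ => g * (M + 1) * X ^ 2) p ≤
      (X ^ 2 * η p.2 + 2 * X + lam * X * η p.2) * G := by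
  have hlow : 0 ≤ lam * X * η p.2 * G := by positivity
  by_cases hω : p ∈ Prod.snd ⁻¹' ω
  · rw [indicator_of_mem hω]
    have hhigh : 0 ≤ (X ^ 2 * η p.2 + 2 * X) * G := by positivity
    have hXM : X * (X * η p.2 + 1) ≤ (M + 1) * X ^ 2 := by nlinarith [sq_nonneg X]
    nlinarith [mul_le_mul_of_nonneg_left hXM hg]
  · rw [indicator_of_notMem hω]
    have hhigh := mul_le_mul_of_nonneg_left (hgG hω)
      (show 0 ≤ X ^ 2 * η p.2 + 2 * X by positivity)
    nlinarith

lemma div_two_mul_carlemanSource_eq (g : ℝ) (ω : Set E) (p : ℝ × E) :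
    g * s * lam / 2 * carlemanSource η M T lam s ω p =
      W p * ((Prod.snd ⁻¹' ω).indicator (fun _ => g * (M + 1) * (s * lam * ξ p) ^ 2) p
        - g / 2 * (s * lam * ξ p * (s * lam * ξ p * η p.2 + 1))) := by
  by_cases hω : p ∈ Prod.snd ⁻¹' ω
  · simp only [carlemanSource, indicator_of_mem hω]
    ring
  · simp only [carlemanSource, indicator_of_notMem hω]
    ring

variable [NormedAddCommGroup E] [InnerProductSpace ℝ E] [FiniteDimensional ℝ E]

/-- Outside `ω` the lower bound on `‖∇η‖²` makes the second-order terms dominate all the others;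
inside `ω` they are merely nonnegative. -/
lemma dual_operator_carlemanWeight_mul_le {Ω ω : Set E} {C A K g : ℝ}
    (hη : IsCarlemanProfile Ω η M) (h : IsCarlemanParameter C M T A lam s)
    (hC : K + 8 ≤ C * g) (hK : ∀ x ∈ Ω, |Δ η x| ≤ K)
    (hg : ∀ x ∈ Ω \ ω, g ≤ ‖gradient η x‖ ^ 2) {p : ℝ × E} (hp : p ∈ Ioo 0 T ×ˢ Ω) :
    A * (W p * η p.2) + Wₜ p * η p.2 - Δ (fun z => W (p.1, z) * η z) p.2 ≤
      g * s * lam / 2 * carlemanSource η M T lam s ω p := by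
  have hη0 : 0 ≤ η p.2 := hη.nonneg _ (subset_closure hp.2)
  have hηM : η p.2 ≤ M := hη.le _ (subset_closure hp.2)
  have hC0 : 0 < C := zero_lt_one.trans_le h.one_le_const
  have hg0 : 0 < g := pos_of_mul_pos_right
    (by linarith [(abs_nonneg _).trans (hK _ hp.2)]) hC0.le
  have hCX := four_mul_le_mul_carlemanXi hp.1 hη0 hC0.le h.one_le h.mul_time_sq_le
  have hlow := lower_order_terms_le hp.1 hη0 hηM h hC (hK _ hp.2)
  have hX1 : 1 ≤ s * lam * ξ p := by linarith [h.one_le_const]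
  have hhigh := sub_indicator_le_higher_order_terms (ω := ω) hη0 hηM (zero_le_one.trans h.one_le)
    hX1 hg0.le (sq_nonneg ‖gradient η p.2‖) fun hω => hg p.2 ⟨hp.2, hω⟩
  rw [div_two_mul_carlemanSource_eq, laplacian_carlemanWeight_mul hη.contDiff,
    carlemanWeightDeriv]
  linear_combination mul_le_mul_of_nonneg_left (add_le_add hlow hhigh) (carlemanWeight_pos p).le

end Subsolution

lemma mul_carlemanSource_eq (u : ℝ × E → ℝ) (ω : Set E) (p : ℝ × E) :
    u p * carlemanSource η M T lam s ω p =
      2 * (M + 1) * lam *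
          (Prod.snd ⁻¹' ω).indicator (fun p => W p * (s * ξ p ^ 2) * u p) p
        - (lam * (W p * (s * ξ p ^ 2) * η p.2 * u p) + W p * ξ p * u p) := by
  by_cases hω : p ∈ Prod.snd ⁻¹' ω
  · simp only [carlemanSource, indicator_of_mem hω]
    ring
  · simp only [carlemanSource, indicator_of_notMem hω]
    ring

section Integrability

variable [NormedAddCommGroup E] [NormedSpace ℝ E] [FiniteDimensional ℝ E] [MeasurableSpace E]
  {μ : Measure E} [IsFiniteMeasureOnCompacts μ] {Ω : Set E} {u : ℝ × E → ℝ}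

lemma tendsto_setIntegral_mul_carlemanWeight (hΩb : Bornology.IsBounded Ω)
    (hη : IsCarlemanProfile Ω η M) (hlam : 0 < lam) (hs : 0 < s)
    (hu : ContinuousOn u (Icc 0 T ×ˢ closure Ω)) {l : Filter ℝ} (hl : ∀ᶠ t in l, t ∈ Ioo 0 T)
    (hlim : Tendsto (fun t => t * (T - t)) l (𝓝 0)) :
    Tendsto (fun t => ∫ x in Ω, u (t, x) * W (t, x) ∂μ) l (𝓝 0) := by
  obtain ⟨B, hB⟩ := (isCompact_Icc.prod hΩb.isCompact_closure).exists_bound_of_continuousOn hu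
  refine squeeze_zero_norm' (a := fun t =>
    B * (t * (T - t) / (s * (exp (lam * M) - 1))) * μ.real Ω) ?_ ?_
  · filter_upwards [hl] with t ht
    refine norm_setIntegral_le_of_norm_le_const
      ((measure_mono subset_closure).trans_lt hΩb.isCompact_closure.measure_lt_top) fun x hx => ?_
    have hx' : x ∈ closure Ω := subset_closure hx
    have hBx := hB (t, x) ⟨Ioo_subset_Icc_self ht, hx'⟩
    rw [norm_mul, Real.norm_of_nonneg (carlemanWeight_pos _).le]
    exact mul_le_mul hBx (carlemanWeight_le_mul_sub ht hlam hη.bound_pos (hη.nonneg x hx')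
      (hη.le x hx') hs) (carlemanWeight_pos _).le ((norm_nonneg _).trans hBx)
  · simpa using ((hlim.div_const (s * (exp (lam * M) - 1))).const_mul B).mul_const (μ.real Ω)

variable [BorelSpace E]

lemma integrableOn_carlemanWeight_mul_pow_mul (hΩ : IsOpen Ω) (hΩb : Bornology.IsBounded Ω)
    (hη : IsCarlemanProfile Ω η M) (hlam : 0 < lam) (hs : 0 < s)
    (hu : ContinuousOn u (Icc 0 T ×ˢ closure Ω)) (n : ℕ) :
    IntegrableOn (fun p => W p * ξ p ^ n * u p) (Ioo 0 T ×ˢ Ω) (volume.prod μ) := by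
  have hU : IsOpen (Ioo 0 T ×ˢ Ω) := isOpen_Ioo.prod hΩ
  have hcompact : IsCompact (Icc 0 T ×ˢ closure Ω) := isCompact_Icc.prod hΩb.isCompact_closure
  have hsub : Ioo 0 T ×ˢ Ω ⊆ Icc 0 T ×ˢ closure Ω :=
    prod_mono Ioo_subset_Icc_self subset_closure
  obtain ⟨B, hB⟩ := hcompact.exists_bound_of_continuousOn hu
  have hcont : ContinuousOn (fun p => W p * ξ p ^ n) (Ioo 0 T ×ˢ Ω) :=
    ((continuousOn_carlemanWeight hη.contDiff.continuous).mul
      ((continuousOn_carlemanXi hη.contDiff.continuous).pow n)).mono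
        (prod_mono subset_rfl (subset_univ Ω))
  have hcont' : ContinuousOn (fun p => W p * ξ p ^ n * u p) (Ioo 0 T ×ˢ Ω) :=
    hcont.mul (hu.mono hsub)
  refine IntegrableOn.of_bound ((measure_mono hsub).trans_lt hcompact.measure_lt_top)
    (hcont'.aestronglyMeasurable hU.measurableSet)
    (n.factorial / (exp (lam * M) - 1) ^ n / s ^ n * B)
    (ae_restrict_of_forall_mem hU.measurableSet fun p hp => ?_)
  have hξ := carlemanXi_pos (η := η) (lam := lam) hp.1
  have hW := carlemanWeight_pos (η := η) (M := M) (T := T) (lam := lam) (s := s) p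
  have hle : W p * ξ p ^ n ≤ n.factorial / (exp (lam * M) - 1) ^ n / s ^ n := by
    rw [le_div_iff₀ (by positivity), mul_assoc, ← mul_pow, mul_comm (ξ p)]
    exact carlemanWeight_mul_pow_le hp.1 hlam hη.bound_pos (hη.le _ (hsub hp).2) hs.le n
  rw [norm_mul, Real.norm_of_nonneg (by positivity)]
  exact mul_le_mul hle (hB p (hsub hp)) (norm_nonneg _) (le_trans (by positivity) hle)

lemma integrableOn_carlemanSource_terms (hΩ : IsOpen Ω) (hΩb : Bornology.IsBounded Ω)
    (hη : IsCarlemanProfile Ω η M) (hlam : 0 < lam) (hs : 0 < s)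
    (hu : ContinuousOn u (Icc 0 T ×ˢ closure Ω)) :
    IntegrableOn (fun p => W p * (s * ξ p ^ 2) * u p) (Ioo 0 T ×ˢ Ω) (volume.prod μ) ∧
      IntegrableOn (fun p => W p * (s * ξ p ^ 2) * η p.2 * u p) (Ioo 0 T ×ˢ Ω) (volume.prod μ) ∧
      IntegrableOn (fun p => W p * ξ p * u p) (Ioo 0 T ×ˢ Ω) (volume.prod μ) := by
  have hηu : ContinuousOn (fun p => η p.2 * u p) (Icc 0 T ×ˢ closure Ω) :=
    (hη.contDiff.continuous.comp continuous_snd).continuousOn.mul hu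
  have h (n : ℕ) {w : ℝ × E → ℝ} (hw : ContinuousOn w (Icc 0 T ×ˢ closure Ω)) :=
    integrableOn_carlemanWeight_mul_pow_mul (μ := μ) hΩ hΩb hη hlam hs hw n
  refine ⟨((h 2 hu).const_mul s).congr ?_, ((h 2 hηu).const_mul s).congr ?_, ?_⟩
  · exact .of_forall fun p => by ring
  · exact .of_forall fun p => by ring
  · simpa only [pow_one] using h 1 hu

lemma integrableOn_mul_carlemanSource (hΩ : IsOpen Ω) (hΩb : Bornology.IsBounded Ω)
    (hη : IsCarlemanProfile Ω η M) (hlam : 0 < lam) (hs : 0 < s)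
    (hu : ContinuousOn u (Icc 0 T ×ˢ closure Ω)) {ω : Set E} (hω : MeasurableSet ω) :
    IntegrableOn (fun p => u p * carlemanSource η M T lam s ω p) (Ioo 0 T ×ˢ Ω)
      (volume.prod μ) := by
  obtain ⟨h₁, h₂, h₃⟩ :=
    integrableOn_carlemanSource_terms (μ := μ) hΩ hΩb hη hlam hs hu
  simp only [mul_carlemanSource_eq]
  exact ((h₁.indicator (measurable_snd hω)).const_mul _).sub ((h₂.const_mul lam).add h₃)

lemma integrableOn_mul_carlemanSource_slice {t : ℝ} {f : E → ℝ} (hΩb : Bornology.IsBounded Ω)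
    (hη : Continuous η) (hf : ContinuousOn f (closure Ω)) {ω : Set E} (hω : MeasurableSet ω)
    (ht : t ∈ Ioo 0 T) :
    IntegrableOn (fun x => f x * carlemanSource η M T lam s ω (t, x)) Ω μ := by
  have hW : ContinuousOn (fun x => W (t, x)) (closure Ω) :=
    (continuousOn_prodMk_left (continuousOn_carlemanWeight hη) ht).mono (subset_univ _)
  have hξ : ContinuousOn (fun x => ξ (t, x)) (closure Ω) :=
    (continuousOn_prodMk_left (continuousOn_carlemanXi hη) ht).mono (subset_univ _)
  have hpart : ContinuousOn (fun x => W (t, x) * (s * ξ (t, x) ^ 2)) (closure Ω) :=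
    hW.mul (continuousOn_const.mul (hξ.pow 2))
  have h₁ := integrableOn_of_continuousOn_closure (μ := μ) hΩb (hpart.mul hf)
  have h₂ := integrableOn_of_continuousOn_closure (μ := μ) hΩb
    ((hpart.mul hη.continuousOn).mul hf)
  have h₃ := integrableOn_of_continuousOn_closure (μ := μ) hΩb ((hW.mul hξ).mul hf)
  exact (((h₁.indicator hω).const_mul (2 * (M + 1) * lam)).sub ((h₂.const_mul lam).add h₃)).congr
    (.of_forall fun x => (mul_carlemanSource_eq (fun p => f p.2) ω (t, x)).symm)

lemma setIntegral_setIntegral_mul_carlemanSource (hΩ : IsOpen Ω) (hΩb : Bornology.IsBounded Ω)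
    (hη : IsCarlemanProfile Ω η M) (hlam : 0 < lam) (hs : 0 < s)
    (hu : ContinuousOn u (Icc 0 T ×ˢ closure Ω)) {ω : Set E} (hω : MeasurableSet ω)
    (hωΩ : ω ⊆ Ω) :
    ∫ t in Ioo 0 T, ∫ x in Ω, u (t, x) * carlemanSource η M T lam s ω (t, x) ∂μ =
      2 * (M + 1) * lam *
          (∫ t in Ioo 0 T, ∫ x in ω, W (t, x) * (s * ξ (t, x) ^ 2) * u (t, x) ∂μ)
        - (lam * (∫ t in Ioo 0 T, ∫ x in Ω, W (t, x) * (s * ξ (t, x) ^ 2) * η x * u (t, x) ∂μ)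
          + ∫ t in Ioo 0 T, ∫ x in Ω, W (t, x) * ξ (t, x) * u (t, x) ∂μ) := by
  obtain ⟨h₁, h₂, h₃⟩ :=
    integrableOn_carlemanSource_terms (μ := μ) hΩ hΩb hη hlam hs hu
  have hind := h₁.indicator (measurable_snd hω)
  have hinter : Ioo 0 T ×ˢ Ω ∩ Prod.snd ⁻¹' ω = Ioo 0 T ×ˢ ω := by
    rw [← univ_prod, prod_inter_prod, inter_univ, inter_eq_right.2 hωΩ]
  rw [← setIntegral_prod _ (integrableOn_mul_carlemanSource hΩ hΩb hη hlam hs hu hω),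
    ← setIntegral_prod (fun p => W p * (s * ξ p ^ 2) * u p)
      (h₁.mono_set (prod_mono subset_rfl hωΩ)),
    ← setIntegral_prod (fun p => W p * (s * ξ p ^ 2) * η p.2 * u p) h₂,
    ← setIntegral_prod (fun p => W p * ξ p * u p) h₃]
  simp only [mul_carlemanSource_eq]
  rw [integral_sub, integral_add, integral_const_mul, integral_const_mul,
    setIntegral_indicator (measurable_snd hω), hinter]
  exacts [h₂.const_mul lam, h₃, hind.const_mul _, (h₂.const_mul lam).add h₃]

end Integrability

section Energy

lemma isC2OnClosure_carlemanWeight_mul [NormedAddCommGroup E] [NormedSpace ℝ E]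
    (hη : ContDiff ℝ 2 η) (t : ℝ) (Ω : Set E) :
    IsC2OnClosure (fun x => W (t, x) * η x) Ω := by
  refine .of_contDiff ?_ Ω
  simp only [carlemanWeight, carlemanAlpha]
  fun_prop

variable [NormedAddCommGroup E] [InnerProductSpace ℝ E] [FiniteDimensional ℝ E]

/-- Nonnegative classical solutions `q`, with time derivative `qt`, of the backward inequality
`-∂ₜq - Δq + A q ≥ 0` on `(0, T) × Ω` with homogeneous Dirichlet boundary condition. -/
structure IsNonnegSupersolution (Ω : Set E) (T A : ℝ) (q qt : ℝ × E → ℝ) : Prop where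
  continuousOn : ContinuousOn q (Icc 0 T ×ˢ closure Ω)
  nonneg : ∀ p ∈ Icc 0 T ×ˢ closure Ω, 0 ≤ q p
  hasDerivAt : ∀ p ∈ Ioo 0 T ×ˢ closure Ω, HasDerivAt (fun τ => q (τ, p.2)) (qt p) p.1
  continuousOn_deriv : ContinuousOn qt (Ioo 0 T ×ˢ closure Ω)
  isC2OnClosure : ∀ t ∈ Ioo 0 T, IsC2OnClosure (fun x => q (t, x)) Ω
  eq_zero : ∀ t ∈ Ioo 0 T, ∀ x ∈ frontier Ω, q (t, x) = 0
  deriv_add_laplacian_le : ∀ t ∈ Ioo 0 T, ∀ x ∈ Ω,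
    qt (t, x) + Δ (fun z => q (t, z)) x ≤ A * q (t, x)

variable {Ω ω : Set E} {A C K g t : ℝ} {q qt : ℝ × E → ℝ}

variable [MeasurableSpace E] [BorelSpace E] {μ : Measure E}

lemma hasDerivAt_setIntegral_mul_carlemanWeight [IsFiniteMeasureOnCompacts μ] (hΩ : IsOpen Ω)
    (hΩb : Bornology.IsBounded Ω) (hη : Continuous η) (hq : IsNonnegSupersolution Ω T A q qt)
    (ht : t ∈ Ioo 0 T) :
    HasDerivAt (fun τ => ∫ x in Ω, q (τ, x) * (W (τ, x) * η x) ∂μ)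
      (∫ x in Ω, (qt (t, x) * (W (t, x) * η x) + q (t, x) * (Wₜ (t, x) * η x)) ∂μ) t := by
  have hηc : ContinuousOn (fun p : ℝ × E => η p.2) (Ioo 0 T ×ˢ closure Ω) :=
    (hη.comp continuous_snd).continuousOn
  have hsub : Ioo 0 T ×ˢ closure Ω ⊆ Ioo 0 T ×ˢ univ := prod_mono subset_rfl (subset_univ _)
  have hqc := hq.continuousOn.mono (prod_mono Ioo_subset_Icc_self (subset_refl (closure Ω)))
  have hv := ((continuousOn_carlemanWeight (M := M) (lam := lam) (s := s) hη).mono hsub).mul hηc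
  have hv' := ((continuousOn_carlemanWeightDeriv (M := M) (lam := lam) (s := s) hη).mono
    hsub).mul hηc
  exact hasDerivAt_setIntegral_of_continuousOn (f := fun p => q p * (W p * η p.2))
    (f' := fun p => qt p * (W p * η p.2) + q p * (Wₜ p * η p.2)) isOpen_Ioo hΩ.measurableSet
    hΩb.isCompact_closure subset_closure (hqc.mul hv)
    ((hq.continuousOn_deriv.mul hv).add (hqc.mul hv'))
    (fun p hp => (hq.hasDerivAt p hp).mul
      ((hasDerivAt_carlemanWeight hp.1 p.2).mul_const (η p.2))) ht

lemma integral_deriv_mul_carlemanWeight_le [μ.IsAddHaarMeasure] (hΩ : IsOpen Ω)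
    (hΩb : Bornology.IsBounded Ω) (hω : MeasurableSet ω) (hη : IsCarlemanProfile Ω η M)
    (h : IsCarlemanParameter C M T A lam s) (hC : K + 8 ≤ C * g) (hK : ∀ x ∈ Ω, |Δ η x| ≤ K)
    (hg : ∀ x ∈ Ω \ ω, g ≤ ‖gradient η x‖ ^ 2) (hq : IsNonnegSupersolution Ω T A q qt)
    (ht : t ∈ Ioo 0 T) :
    ∫ x in Ω, (qt (t, x) * (W (t, x) * η x) + q (t, x) * (Wₜ (t, x) * η x)) ∂μ ≤
      g * s * lam / 2 * ∫ x in Ω, q (t, x) * carlemanSource η M T lam s ω (t, x) ∂μ := by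
  have hηc := hη.contDiff.continuous
  have hv := isC2OnClosure_carlemanWeight_mul (M := M) (T := T) (lam := lam) (s := s)
    hη.contDiff t Ω
  have hvt : ContinuousOn (fun x => Wₜ (t, x) * η x) (closure Ω) :=
    ((continuousOn_prodMk_left (continuousOn_carlemanWeightDeriv hηc) ht).mono
      (subset_univ _)).mul hηc.continuousOn
  have hqt := hq.isC2OnClosure t ht
  have hqnn (x : E) (hx : x ∈ closure Ω) : 0 ≤ q (t, x) :=
    hq.nonneg (t, x) ⟨Ioo_subset_Icc_self ht, hx⟩
  refine (hqt.integral_mul_add_mul_le hΩ hΩb (hq.eq_zero t ht) hv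
    (fun x hx => by rw [hη.eq_zero x hx, mul_zero])
    (fun x hx => mul_nonneg (carlemanWeight_pos _).le (hη.nonneg x (subset_closure hx)))
    (continuousOn_prodMk_left hq.continuousOn_deriv ht) hvt
    (hq.deriv_add_laplacian_le t ht)).trans ?_
  rw [← integral_const_mul]
  refine setIntegral_mono_on (integrableOn_of_continuousOn_closure hΩb (hqt.continuousOn.mul
      (((continuousOn_const.mul hv.continuousOn).add hvt).sub hv.continuousOn_laplacian)))
    ((integrableOn_mul_carlemanSource_slice hΩb hηc hqt.continuousOn hω ht).const_mul _)
    hΩ.measurableSet fun x hx => ?_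
  have := mul_le_mul_of_nonneg_left
    (dual_operator_carlemanWeight_mul_le (p := (t, x)) hη h hC hK hg ⟨ht, hx⟩)
    (hqnn x (subset_closure hx))
  linarith

lemma setIntegral_setIntegral_mul_carlemanSource_nonneg [μ.IsAddHaarMeasure] (hΩ : IsOpen Ω)
    (hΩb : Bornology.IsBounded Ω) (hω : MeasurableSet ω) (hη : IsCarlemanProfile Ω η M)
    (h : IsCarlemanParameter C M T A lam s) (hg0 : 0 < g) (hC : K + 8 ≤ C * g)
    (hK : ∀ x ∈ Ω, |Δ η x| ≤ K) (hg : ∀ x ∈ Ω \ ω, g ≤ ‖gradient η x‖ ^ 2)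
    (hq : IsNonnegSupersolution Ω T A q qt) :
    0 ≤ ∫ t in Ioo 0 T, ∫ x in Ω, q (t, x) * carlemanSource η M T lam s ω (t, x) ∂μ := by
  have hlam : 0 < lam := zero_lt_one.trans_le h.one_le
  have hs : 0 < s := h.parameter_pos
  have hS : IntegrableOn
      (fun t => ∫ x in Ω, q (t, x) * carlemanSource η M T lam s ω (t, x) ∂μ) (Ioo 0 T) := by
    have := integrableOn_mul_carlemanSource (μ := μ) hΩ hΩb hη hlam hs hq.continuousOn hω
    rw [IntegrableOn, ← Measure.prod_restrict] at this
    exact this.integral_prod_left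
  have hqη : ContinuousOn (fun p => q p * η p.2) (Icc 0 T ×ˢ closure Ω) :=
    hq.continuousOn.mul (hη.contDiff.continuous.comp continuous_snd).continuousOn
  have hlim {l : Filter ℝ} {a : ℝ} (hl : ∀ᶠ t in l, t ∈ Ioo 0 T) (hla : l ≤ 𝓝 a)
      (ha : a * (T - a) = 0) :
      Tendsto (fun t => ∫ x in Ω, q (t, x) * (W (t, x) * η x) ∂μ) l (𝓝 0) := by
    refine (tendsto_setIntegral_mul_carlemanWeight (μ := μ) hΩb hη hlam hs hqη hl ?_).congr
      fun t => ?_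
    · exact ((show Continuous fun t => t * (T - t) by fun_prop).tendsto' a 0 ha).mono_left hla
    · exact integral_congr_ae (.of_forall fun x => by ring)
  have key := sub_le_setIntegral_Ioo_of_hasDerivAt_of_tendsto h.time_pos
    (fun t ht => hasDerivAt_setIntegral_mul_carlemanWeight hΩ hΩb hη.contDiff.continuous hq ht)
    (hS.const_mul (g * s * lam / 2))
    (fun t ht => integral_deriv_mul_carlemanWeight_le hΩ hΩb hω hη h hC hK hg hq ht)
    (hlim (Ioo_mem_nhdsGT h.time_pos) nhdsWithin_le_nhds (by simp))
    (hlim (Ioo_mem_nhdsLT h.time_pos) nhdsWithin_le_nhds (by simp))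
  rw [sub_self, integral_const_mul] at key
  exact nonneg_of_mul_nonneg_right key (by positivity)

end Energy

end Weight

section Supersolution

variable {E : Type*} [NormedAddCommGroup E] [InnerProductSpace ℝ E] [FiniteDimensional ℝ E]
  [MeasurableSpace E] [BorelSpace E] {μ : Measure E} [μ.IsAddHaarMeasure] {Ω : Set E} {T A : ℝ}

lemma isNonnegSupersolution_of_eq {a q qt : ℝ × E → ℝ} (hΩ : IsOpen Ω)
    (hA : ∀ᵐ p ∂(volume.prod μ).restrict (Ioo 0 T ×ˢ Ω), |a p| ≤ A)
    (hq : ContinuousOn q (Icc 0 T ×ˢ closure Ω)) (hq0 : ∀ p ∈ Icc 0 T ×ˢ closure Ω, 0 ≤ q p)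
    (hqt : ∀ p ∈ Ioo 0 T ×ˢ closure Ω, HasDerivAt (fun τ => q (τ, p.2)) (qt p) p.1)
    (hqtc : ContinuousOn qt (Ioo 0 T ×ˢ closure Ω))
    (hqd : ∀ p ∈ Ioo 0 T ×ˢ closure Ω, DifferentiableAt ℝ (fun z => q (p.1, z)) p.2)
    (hqdd : ∀ p ∈ Ioo 0 T ×ˢ closure Ω,
      DifferentiableAt ℝ (fderiv ℝ (fun z => q (p.1, z))) p.2)
    (hqddc : ContinuousOn (fun p : ℝ × E => fderiv ℝ (fderiv ℝ (fun z => q (p.1, z))) p.2)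
      (Ioo 0 T ×ˢ closure Ω))
    (heq : ∀ t ∈ Ioo 0 T, ∀ x ∈ Ω,
      -qt (t, x) - Δ (fun z => q (t, z)) x + a (t, x) * q (t, x) = 0)
    (hbd : ∀ t ∈ Ioo 0 T, ∀ x ∈ frontier Ω, q (t, x) = 0) :
    IsNonnegSupersolution Ω T A q qt := by
  refine ⟨hq, hq0, hqt, hqtc, fun t ht => ⟨fun x hx => hqd (t, x) ⟨ht, hx⟩,
    fun x hx => hqdd (t, x) ⟨ht, hx⟩, continuousOn_prodMk_left hqddc ht⟩, hbd,
    fun t ht x hx => ?_⟩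
  have hU : IsOpen (Ioo 0 T ×ˢ Ω) := isOpen_Ioo.prod hΩ
  have hsub : Ioo 0 T ×ˢ Ω ⊆ Ioo 0 T ×ˢ closure Ω := prod_mono subset_rfl subset_closure
  have hsub' : Ioo 0 T ×ˢ Ω ⊆ Icc 0 T ×ˢ closure Ω :=
    prod_mono Ioo_subset_Icc_self subset_closure
  have hΔ : ContinuousOn (fun p : ℝ × E => Δ (fun z => q (p.1, z)) p.2)
      (Ioo 0 T ×ˢ closure Ω) := by
    simp only [laplacian_eq_sum_fderiv_fderiv (stdOrthonormalBasis ℝ E)]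
    exact continuousOn_finsetSum _ fun i _ =>
      (hqddc.clm_apply continuousOn_const).clm_apply continuousOn_const
  -- The bound on `a` holds only almost everywhere; continuity upgrades its consequence.
  refine le_on_of_ae_restrict_le (μ := volume.prod μ) hU ((hqtc.add hΔ).mono hsub)
    (continuousOn_const.mul (hq.mono hsub')) ?_ (t, x) ⟨ht, hx⟩
  filter_upwards [hA, ae_restrict_mem hU.measurableSet] with p hp hpU
  have := mul_le_mul_of_nonneg_right ((le_abs_self _).trans hp) (hq0 p (hsub' hpU))
  have := heq p.1 hpU.1 p.2 hpU.2
  simp only [Pi.add_apply, Pi.mul_apply]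
  linarith

theorem carleman_L1_dirichlet_general {ω : Set E} (hΩ : IsOpen Ω) (hΩb : Bornology.IsBounded Ω)
    (hω : MeasurableSet ω) (hωΩ : ω ⊆ Ω) {η : E → ℝ} {M : ℝ} (hη : IsCarlemanProfile Ω η M)
    (hgrad : ∀ x ∈ closure (Ω \ ω), gradient η x ≠ 0) :
    ∃ C > (0 : ℝ), ∃ C₁ > (0 : ℝ), ∀ T : ℝ, 0 < T → ∀ A : ℝ, 0 ≤ A → ∀ lam : ℝ, 1 ≤ lam →
      ∀ s : ℝ, C * (exp (2 * lam * M) * T + T ^ 2 + T ^ 2 * √A) ≤ s →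
      ∀ q qt : ℝ × E → ℝ, IsNonnegSupersolution Ω T A q qt →
        lam * (∫ t in Ioo 0 T, ∫ x in Ω, carlemanWeight η M T lam s (t, x) *
            (s * carlemanXi η T lam (t, x) ^ 2) * η x * q (t, x) ∂μ)
          + (∫ t in Ioo 0 T, ∫ x in Ω, carlemanWeight η M T lam s (t, x) *
            carlemanXi η T lam (t, x) * q (t, x) ∂μ)
          ≤ C₁ * lam * ∫ t in Ioo 0 T, ∫ x in ω, carlemanWeight η M T lam s (t, x) *
            (s * carlemanXi η T lam (t, x) ^ 2) * q (t, x) ∂μ := by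
  obtain ⟨g, hg0, hg⟩ := exists_pos_le_norm_gradient_sq (hη.contDiff.of_le (by norm_num))
    (hΩb.subset sdiff_subset).isCompact_closure hgrad
  obtain ⟨K, hK⟩ := hΩb.isCompact_closure.exists_bound_of_continuousOn
    (IsC2OnClosure.of_contDiff hη.contDiff Ω).continuousOn_laplacian
  have hC : |K| + 8 ≤ (1 + (|K| + 8) / g) * g := by
    rw [add_mul, div_mul_cancel₀ _ hg0.ne']
    linarith
  have hM := hη.bound_pos
  refine ⟨1 + (|K| + 8) / g, by positivity, 2 * (M + 1), by positivity,
    fun T hT A hA lam hlam s hs q qt hq => ?_⟩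
  have hparam : IsCarlemanParameter (1 + (|K| + 8) / g) M T A lam s :=
    ⟨le_add_of_nonneg_right (by positivity), hT, hA, hlam, hs⟩
  have hnonneg := setIntegral_setIntegral_mul_carlemanSource_nonneg (μ := μ) hΩ hΩb hω hη hparam
    hg0 hC (fun x hx => (hK x (subset_closure hx)).trans (le_abs_self K))
    (fun x hx => hg x (subset_closure hx)) hq
  rw [setIntegral_setIntegral_mul_carlemanSource hΩ hΩb hη (zero_lt_one.trans_le hlam)
    hparam.parameter_pos hq.continuousOn hω hωΩ] at hnonneg
  linarith

end Supersolution

end CarlemanEstimate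

theorem carleman_L1_dirichlet
    (N : ℕ) (hN : 1 ≤ N)
    (Ω ω₀ ω : Set (EuclideanSpace ℝ (Fin N)))
    (hΩo : IsOpen Ω) (hΩb : Bornology.IsBounded Ω) (hΩc : IsConnected Ω)
    (hω₀o : IsOpen ω₀) (hω₀ne : ω₀.Nonempty) (hωo : IsOpen ω) (hωne : ω.Nonempty)
    (hω₀ω : closure ω₀ ⊆ ω) (hωΩ : ω ⊆ Ω)
    (η : EuclideanSpace ℝ (Fin N) → ℝ) (hη : ContDiff ℝ 2 η)
    (hηpos : ∀ x ∈ Ω, 0 < η x) (hηbd : ∀ x ∈ frontier Ω, η x = 0)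
    (hηgrad : ∀ x ∈ closure (Ω \ ω₀), 0 < ‖gradient η x‖)
    (M : ℝ) (hM : IsGreatest (η '' closure Ω) M) :
    ∃ C > (0:ℝ), ∃ C₁ > (0:ℝ),
      ∀ T : ℝ, 0 < T →
      ∀ a : ℝ × EuclideanSpace ℝ (Fin N) → ℝ, Measurable a →
      (∃ B : ℝ, ∀ p ∈ Set.Ioo (0:ℝ) T ×ˢ Ω, |a p| ≤ B) →
      ∀ lam : ℝ, 1 ≤ lam →
      ∀ s : ℝ,
        C * (Real.exp (2 * lam * M) * T + T ^ 2 +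
          T ^ 2 * Real.sqrt (eLpNorm a ⊤ (volume.restrict (Set.Ioo (0:ℝ) T ×ˢ Ω))).toReal) ≤ s →
      ∀ q qt : ℝ × EuclideanSpace ℝ (Fin N) → ℝ,
        ContinuousOn q (Set.Icc 0 T ×ˢ closure Ω) →
        (∀ p ∈ Set.Icc 0 T ×ˢ closure Ω, 0 ≤ q p) →
        (∀ p ∈ Set.Ioo 0 T ×ˢ closure Ω,
          HasDerivAt (fun τ => q (τ, p.2)) (qt p) p.1) →
        ContinuousOn qt (Set.Ioo 0 T ×ˢ closure Ω) →
        (∀ p ∈ Set.Ioo 0 T ×ˢ closure Ω,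
          DifferentiableAt ℝ (fun z => q (p.1, z)) p.2) →
        (∀ p ∈ Set.Ioo 0 T ×ˢ closure Ω,
          DifferentiableAt ℝ (fun y => fderiv ℝ (fun z => q (p.1, z)) y) p.2) →
        ContinuousOn (fun p : ℝ × EuclideanSpace ℝ (Fin N) =>
          fderiv ℝ (fun z => q (p.1, z)) p.2) (Set.Ioo 0 T ×ˢ closure Ω) →
        ContinuousOn (fun p : ℝ × EuclideanSpace ℝ (Fin N) =>
          fderiv ℝ (fun y => fderiv ℝ (fun z => q (p.1, z)) y) p.2)
          (Set.Ioo 0 T ×ˢ closure Ω) →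
        (∀ t ∈ Set.Ioo (0:ℝ) T, ∀ x ∈ Ω,
          -qt (t, x) - spaceLaplacian (fun z => q (t, z)) x
            + a (t, x) * q (t, x) = 0) →
        (∀ t ∈ Set.Ioo (0:ℝ) T, ∀ x ∈ frontier Ω, q (t, x) = 0) →
        lam * (∫ t in Set.Ioo (0:ℝ) T, ∫ x in Ω,
            Real.exp (-s * ((Real.exp (2 * lam * M) - Real.exp (lam * η x)) / (t * (T - t)))) * (s * (Real.exp (lam * η x) / (t * (T - t))) ^ 2) * η x * q (t, x))
          + (∫ t in Set.Ioo (0:ℝ) T, ∫ x in Ω,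
            Real.exp (-s * ((Real.exp (2 * lam * M) - Real.exp (lam * η x)) / (t * (T - t)))) * (Real.exp (lam * η x) / (t * (T - t))) * q (t, x))
          ≤ C₁ * lam * ∫ t in Set.Ioo (0:ℝ) T, ∫ x in ω,
            Real.exp (-s * ((Real.exp (2 * lam * M) - Real.exp (lam * η x)) / (t * (T - t)))) * (s * (Real.exp (lam * η x) / (t * (T - t))) ^ 2) * q (t, x) := by
  have hgrad : ∀ x ∈ closure (Ω \ ω), gradient η x ≠ 0 := fun x hx => norm_pos_iff.1 <|
    hηgrad x (closure_mono (sdiff_subset_sdiff_right (subset_closure.trans hω₀ω)) hx)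
  obtain ⟨C, hC, C₁, hC₁, h⟩ := carleman_L1_dirichlet_general (μ := volume) hΩo hΩb
    hωo.measurableSet hωΩ (isCarlemanProfile_of_isGreatest hη hΩc.nonempty hηpos hηbd hM) hgrad
  refine ⟨C, hC, C₁, hC₁, fun T hT a _ ⟨B, hB⟩ lam hlam s hs q qt hq hq0 hqt hqtc hqd hqdd _ hqddc
    heq hbd => h T hT _ ENNReal.toReal_nonneg lam hlam s hs q qt ?_⟩
  have hQ : MeasurableSet (Ioo 0 T ×ˢ Ω) := measurableSet_Ioo.prod hΩo.measurableSet
  refine isNonnegSupersolution_of_eq (μ := volume) hΩo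
    (ae_abs_le_toReal_eLpNorm_top (ae_restrict_of_forall_mem hQ hB)) hq hq0 hqt hqtc hqd hqdd
    hqddc (fun t ht x hx => ?_) hbd
  rw [← spaceLaplacian_eq_laplacian (hqdd (t, x) ⟨ht, subset_closure hx⟩)]
  exact heq t ht x hx
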